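/- Let m_r, m, L₃ > 0 and set a = 1/√(m_r + m), c = √((m_r + m)/(m L₃² m_r)), b = 1/(c L₃ m_r). Define T : ℝ³ → ℝ^{3×3} by T(q) = [[a, 0, −b cos q₃], [0, a, −b sin q₃], [0, 0, c]] and M(q) = [[m_r + m, 0, m L₃ cos q₃], [0, m_r + m, m L₃ sin q₃], [m L₃ cos q₃, m L₃ sin q₃, m L₃²]]. Then: (a) the columns of T, viewed as vector fields on ℝ³, pairwise commute, i.e. [(T)_i, (T)_j](q) = 0 for all q ∈ ℝ³ and i, j ∈ {1,2,3}; and (b) T(q) T(q)^⊤ M(q) = I₃ for all q ∈ ℝ³, i.e. T is a factor of the inverse inertia matrix M(q)^{-1} = T(q)T(q)^⊤. -/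

import Mathlib

open Matrix

/-- The Jacobian matrix of a map `X : ℝⁿ → ℝⁿ` at a point `q`. -/
noncomputable def jacobianMatrix {n : ℕ} (X : (Fin n → ℝ) → (Fin n → ℝ)) (q : Fin n → ℝ) :
    Matrix (Fin n) (Fin n) ℝ :=
  Matrix.of fun i j => fderiv ℝ X q (Pi.single j 1) i

/-- The Lie bracket of two vector fields on ℝⁿ:
`[X,Y](q) = DY(q) X(q) − DX(q) Y(q)`. -/
noncomputable def lieBracket {n : ℕ} (X Y : (Fin n → ℝ) → (Fin n → ℝ)) (q : Fin n → ℝ) :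
    Fin n → ℝ :=
  (jacobianMatrix Y q) *ᵥ X q - (jacobianMatrix X q) *ᵥ Y q

/-- The `j`-th column of a matrix-valued map, viewed as a vector field. -/
def matCol {n : ℕ} (T : (Fin n → ℝ) → Matrix (Fin n) (Fin n) ℝ) (j : Fin n) :
    (Fin n → ℝ) → (Fin n → ℝ) :=
  fun q i => T q i j

/-!
The first two columns of `T` are constant fields along which `q₃` does not change, and the third
column depends on `q₃` only. A constant field commutes with every field invariant under its flow,
so the columns commute without any derivative being computed.

The columns are also orthonormal for the inertia metric, `Tᵀ M T = 1`. Since `T` is square, this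
is the same as `T (Tᵀ M) = 1`.
-/

section LieBracket

theorem fderiv_apply_eq_zero_of_forall_add_smul {𝕜 E F : Type*} [NontriviallyNormedField 𝕜]
    [NormedAddCommGroup E] [NormedSpace 𝕜 E] [NormedAddCommGroup F] [NormedSpace 𝕜 F]
    {f : E → F} {x v : E} (h : ∀ t : 𝕜, f (x + t • v) = f x) : fderiv 𝕜 f x v = 0 := by
  by_cases hf : DifferentiableAt 𝕜 f x
  · rw [← hf.lineDeriv_eq_fderiv, lineDeriv]
    simp only [h, deriv_const]
  · rw [fderiv_zero_of_not_differentiableAt hf, _root_.zero_apply]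

variable {n : ℕ}

theorem jacobianMatrix_mulVec (X : (Fin n → ℝ) → (Fin n → ℝ)) (q v : Fin n → ℝ) :
    jacobianMatrix X q *ᵥ v = fderiv ℝ X q v :=
  LinearMap.toMatrix'_mulVec (fderiv ℝ X q : (Fin n → ℝ) →ₗ[ℝ] (Fin n → ℝ)) v

theorem lieBracket_eq_vectorField_lieBracket (X Y : (Fin n → ℝ) → (Fin n → ℝ)) :
    lieBracket X Y = VectorField.lieBracket ℝ X Y := by
  funext q
  simp only [lieBracket, jacobianMatrix_mulVec, VectorField.lieBracket]

theorem lieBracket_const_left_eq_zero {Y : (Fin n → ℝ) → (Fin n → ℝ)} {q v : Fin n → ℝ}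
    (hY : ∀ t : ℝ, Y (q + t • v) = Y q) : lieBracket (fun _ => v) Y q = 0 := by
  rw [lieBracket_eq_vectorField_lieBracket, VectorField.lieBracket,
    fderiv_apply_eq_zero_of_forall_add_smul hY, fderiv_fun_const, Pi.zero_apply,
    _root_.zero_apply, sub_zero]

theorem lieBracket_matCol_eq_zero {F : ℝ → Matrix (Fin n) (Fin n) ℝ} {k : Fin n}
    (hconst : ∀ j ≠ k, ∀ x y, (F x).col j = (F y).col j) (hzero : ∀ j ≠ k, ∀ x, F x k j = 0)
    (q : Fin n → ℝ) (i j : Fin n) :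
    lieBracket (matCol (fun q => F (q k)) i) (matCol (fun q => F (q k)) j) q = 0 := by
  have left_ne : ∀ i ≠ k, ∀ j,
      lieBracket (matCol (fun q => F (q k)) i) (matCol (fun q => F (q k)) j) q = 0 := by
    intro i hi j
    have hcol : matCol (fun q => F (q k)) i = fun _ => (F (q k)).col i :=
      funext fun p => hconst i hi (p k) (q k)
    rw [hcol]
    refine lieBracket_const_left_eq_zero fun t => ?_
    have hk : (q + t • (F (q k)).col i) k = q k := by
      rw [Pi.add_apply, Pi.smul_apply, col_apply, hzero i hi, smul_zero, add_zero]
    exact congrArg (fun x => (F x).col j) hk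
  rcases ne_or_eq i k with hi | rfl
  · exact left_ne i hi j
  rcases ne_or_eq j i with hj | rfl
  · rw [lieBracket_eq_vectorField_lieBracket, VectorField.lieBracket_swap,
      ← lieBracket_eq_vectorField_lieBracket, left_ne j hj i, neg_zero]
  · rw [lieBracket_eq_vectorField_lieBracket, VectorField.lieBracket_self, Pi.zero_apply]

end LieBracket

section Crane

variable {R : Type*} [CommRing R]

/-- The factor `T` of the crane's inverse inertia matrix, with the direction `(cos q₃, sin q₃)`
replaced by a pair `(u, v)` so that its algebra can be done over any commutative ring. -/
def craneFactor (a b c u v : R) : Matrix (Fin 3) (Fin 3) R :=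
  !![a, 0, -(b * u);
     0, a, -(b * v);
     0, 0, c]

/-- The crane's inertia matrix `M`, with `(cos q₃, sin q₃)` replaced by a pair `(u, v)` as in
`craneFactor`. -/
def craneInertia (mr m L u v : R) : Matrix (Fin 3) (Fin 3) R :=
  !![mr + m, 0, m * L * u;
     0, mr + m, m * L * v;
     m * L * u, m * L * v, m * L ^ 2]

theorem lieBracket_matCol_craneFactor (a b c : ℝ) (u v : ℝ → ℝ) (q : Fin 3 → ℝ) (i j : Fin 3) :
    lieBracket (matCol (fun q => craneFactor a b c (u (q 2)) (v (q 2))) i)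
      (matCol (fun q => craneFactor a b c (u (q 2)) (v (q 2))) j) q = 0 := by
  refine lieBracket_matCol_eq_zero (F := fun x => craneFactor a b c (u x) (v x)) ?_ ?_ q i j
  · intro j hj x y
    ext i
    fin_cases j <;> fin_cases i <;> first | rfl | exact absurd rfl hj
  · intro j hj x
    fin_cases j <;> first | rfl | exact absurd rfl hj

variable {mr m L a b c u v : R}

theorem craneInertia_mul_craneFactor (huv : u ^ 2 + v ^ 2 = 1)
    (hbc : b * (mr + m) = c * (m * L)) :
    craneInertia mr m L u v * craneFactor a b c u v =
      !![a * (mr + m), 0, 0;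
         0, a * (mr + m), 0;
         a * (m * L * u), a * (m * L * v), m * L * (c * L - b)] := by
  rw [craneInertia, craneFactor, mul_fin_three]
  congrm !![?_, ?_, ?_; ?_, ?_, ?_; ?_, ?_, ?_]
  · ring
  · ring
  · linear_combination -u * hbc
  · ring
  · ring
  · linear_combination -v * hbc
  · ring
  · ring
  · linear_combination -m * L * b * huv

theorem craneFactor_transpose (a b c u v : R) :
    (craneFactor a b c u v)ᵀ =
      !![a, 0, 0;
         0, a, 0;
         -(b * u), -(b * v), c] := by
  ext i j
  fin_cases i <;> fin_cases j <;> rfl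

theorem craneFactor_transpose_mul_craneInertia_mul_craneFactor (huv : u ^ 2 + v ^ 2 = 1)
    (ha : a ^ 2 * (mr + m) = 1) (hc : c ^ 2 * (m * L ^ 2 * mr) = mr + m)
    (hb : b * (c * L * mr) = 1) :
    (craneFactor a b c u v)ᵀ * craneInertia mr m L u v * craneFactor a b c u v = 1 := by
  have orthogonal : b * (mr + m) = c * (m * L) := by
    linear_combination -b * hc + c * m * L * hb
  have unit_length : c * (m * L * (c * L - b)) = 1 := by
    have mul_mr : c * (m * L * (c * L - b)) * mr = mr := by
      linear_combination hc - m * hb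
    -- By `hb`, `b * c * L` is an inverse of `mr`.
    linear_combination b * c * L * mul_mr + (1 - c * (m * L * (c * L - b))) * hb
  rw [Matrix.mul_assoc, craneInertia_mul_craneFactor huv orthogonal, craneFactor_transpose,
    mul_fin_three, one_fin_three]
  congrm !![?_, ?_, ?_; ?_, ?_, ?_; ?_, ?_, ?_]
  · linear_combination ha
  · ring
  · ring
  · ring
  · linear_combination ha
  · ring
  · linear_combination -a * u * orthogonal
  · linear_combination -a * v * orthogonal
  · linear_combination unit_length

theorem craneFactor_mul_transpose_mul_craneInertia (huv : u ^ 2 + v ^ 2 = 1)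
    (ha : a ^ 2 * (mr + m) = 1) (hc : c ^ 2 * (m * L ^ 2 * mr) = mr + m)
    (hb : b * (c * L * mr) = 1) :
    craneFactor a b c u v * (craneFactor a b c u v)ᵀ * craneInertia mr m L u v = 1 := by
  rw [Matrix.mul_assoc, mul_eq_one_comm]
  exact craneFactor_transpose_mul_craneInertia_mul_craneFactor huv ha hc hb

end Crane

/-- 2D spider crane gantry cart. The columns of the factor `T(q)`
pairwise commute as vector fields, and `T(q)T(q)ᵀ M(q) = I₃`, i.e. `T` is a
factor of the inverse inertia matrix. -/
theorem stmt14 (mr m L3 : ℝ) (hmr : 0 < mr) (hm : 0 < m) (hL3 : 0 < L3)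
    (a b c : ℝ)
    (ha : a = 1 / Real.sqrt (mr + m))
    (hc : c = Real.sqrt ((mr + m) / (m * L3 ^ 2 * mr)))
    (hb : b = 1 / (c * L3 * mr))
    (T : (Fin 3 → ℝ) → Matrix (Fin 3) (Fin 3) ℝ)
    (hT : ∀ q : Fin 3 → ℝ, T q =
      !![a, 0, -(b * Real.cos (q 2));
         0, a, -(b * Real.sin (q 2));
         0, 0, c])
    (M : (Fin 3 → ℝ) → Matrix (Fin 3) (Fin 3) ℝ)
    (hM : ∀ q : Fin 3 → ℝ, M q =
      !![mr + m, 0, m * L3 * Real.cos (q 2);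
         0, mr + m, m * L3 * Real.sin (q 2);
         m * L3 * Real.cos (q 2), m * L3 * Real.sin (q 2), m * L3 ^ 2]) :
    (∀ (q : Fin 3 → ℝ) (i j : Fin 3),
      lieBracket (matCol T i) (matCol T j) q = 0) ∧
    (∀ q : Fin 3 → ℝ, T q * (T q)ᵀ * M q = 1) := by
  have hsum : 0 < mr + m := add_pos hmr hm
  have ha_sq : a ^ 2 * (mr + m) = 1 := by
    rw [ha, div_pow, one_pow, Real.sq_sqrt hsum.le, one_div_mul_cancel hsum.ne']
  have hden : 0 < m * L3 ^ 2 * mr := by positivity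
  have hc_sq : c ^ 2 * (m * L3 ^ 2 * mr) = mr + m := by
    rw [hc, Real.sq_sqrt (by positivity), div_mul_cancel₀ _ hden.ne']
  have hc_pos : 0 < c := hc ▸ Real.sqrt_pos.2 (div_pos hsum hden)
  have hb_inv : b * (c * L3 * mr) = 1 := by
    rw [hb, one_div_mul_cancel (by positivity)]
  obtain rfl : T = fun q => craneFactor a b c (Real.cos (q 2)) (Real.sin (q 2)) := funext hT
  obtain rfl : M = fun q => craneInertia mr m L3 (Real.cos (q 2)) (Real.sin (q 2)) := funext hM
  exact ⟨lieBracket_matCol_craneFactor a b c Real.cos Real.sin, fun q =>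
    craneFactor_mul_transpose_mul_craneInertia (Real.cos_sq_add_sin_sq (q 2)) ha_sq hc_sq hb_inv⟩
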